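/- Let M be an idempotent magma satisfying the generalized entropic property with binary terms t, s, i.e., (x*y)*(u*v) = t(x,u)*s(y,v) for all x,y,u,v in M. If at least one of the terms t, s is linear, then M is medial. -/

import Mathlib

/-- Evaluation of a binary term (an element of the free magma on two
generators) in a magma `M` under the assignment `0 ↦ a`, `1 ↦ b`. -/
def evalBin {M : Type*} [Mul M] (t : FreeMagma (Fin 2)) (a b : M) : M :=
  FreeMagma.lift ![a, b] t

/-- The number of occurrences of the generator `v` in a binary term. -/
def varCount (v : Fin 2) : FreeMagma (Fin 2) → ℕ
  | .of w => if w = v then 1 else 0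
  | .mul t₁ t₂ => varCount v t₁ + varCount v t₂

/-- A binary term is linear if each generator occurs in it at most once. -/
def IsLinear (t : FreeMagma (Fin 2)) : Prop := ∀ v : Fin 2, varCount v t ≤ 1

/-!
There are four linear terms, and passing to the opposite magma exchanges `t` and `s`, so one may
take `t ∈ {X, Y, XY, YX}`. If `t` is a variable, a product seen from one side depends only on its
last factor, so there `s` acts as a projection. If `t = XY`, the law yields
`x(yz) = (xy)(xz)`, which equates `x s(y, v)` with `x(yv)`. If `t = YX`, it makes right
multiplication an anti-endomorphism, from which `xu` and `ux` turn out to have the same left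
translation; this reduces `YX` to `XY`.
-/

/-- Mediality of a magma, the conclusion of the theorem. -/
def IsMedial (M : Type*) [Mul M] : Prop :=
  ∀ x y u v : M, (x * y) * (u * v) = (x * u) * (y * v)

/-- The generalized entropic property with terms `t` and `s`. -/
def IsGeneralizedEntropic (M : Type*) [Mul M] (t s : FreeMagma (Fin 2)) : Prop :=
  ∀ x y u v : M, (x * y) * (u * v) = evalBin t x u * evalBin s y v

/-- The mirror image of a binary term, which transports terms to the opposite magma: the term is
read backwards and its generators are exchanged, because reversing `(x * y) * (u * v)` turns the
pairs `(x, u)` and `(y, v)` into `(v, y)` and `(u, x)`. -/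
def mirror : FreeMagma (Fin 2) → FreeMagma (Fin 2)
  | .of w => .of w.rev
  | .mul p q => mirror q * mirror p

section Terms

variable {M : Type*} [Mul M]

theorem evalBin_mul (p q : FreeMagma (Fin 2)) (a b : M) :
    evalBin (p * q) a b = evalBin p a b * evalBin q a b :=
  map_mul _ p q

theorem evalBin_self {x : M} (hx : x * x = x) (t : FreeMagma (Fin 2)) : evalBin t x x = x := by
  induction t using FreeMagma.recOnMul with
  | ih1 w => fin_cases w <;> rfl
  | ih2 p q hp hq => rw [evalBin_mul, hp, hq, hx]

theorem exists_forall_apply_lift_eq {α N : Type*} {φ : M → N} (hφ : ∀ u v, φ (u * v) = φ v)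
    (t : FreeMagma α) : ∃ i, ∀ f : α → M, φ (FreeMagma.lift f t) = φ (f i) := by
  induction t using FreeMagma.recOnMul with
  | ih1 i => exact ⟨i, fun _ => rfl⟩
  | ih2 p q _ hq =>
    obtain ⟨i, hi⟩ := hq
    exact ⟨i, fun f => by rw [map_mul, hφ, hi]⟩

theorem apply_evalBin_eq_left_or_right {N : Type*} {φ : M → N} (hφ : ∀ u v, φ (u * v) = φ v)
    (t : FreeMagma (Fin 2)) :
    (∀ a b, φ (evalBin t a b) = φ a) ∨ (∀ a b, φ (evalBin t a b) = φ b) := by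
  obtain ⟨i, hi⟩ := exists_forall_apply_lift_eq hφ t
  fin_cases i
  · exact .inl fun a b => hi ![a, b]
  · exact .inr fun a b => hi ![a, b]

theorem evalBin_mirror (t : FreeMagma (Fin 2)) (a b : Mᵐᵒᵖ) :
    evalBin (mirror t) a b = .op (evalBin t b.unop a.unop) := by
  induction t using FreeMagma.recOnMul with
  | ih1 w => fin_cases w <;> rfl
  | ih2 p q hp hq =>
    change evalBin (mirror q * mirror p) a b = _
    rw [evalBin_mul, evalBin_mul, hp, hq, MulOpposite.op_mul]

theorem varCount_mirror (v : Fin 2) (t : FreeMagma (Fin 2)) :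
    varCount v (mirror t) = varCount v.rev t := by
  induction t using FreeMagma.recOnMul with
  | ih1 w => simp only [mirror, varCount, Fin.rev_eq_iff]
  | ih2 p q hp hq =>
    change varCount v (mirror q) + varCount v (mirror p) = varCount v.rev p + varCount v.rev q
    rw [hp, hq, add_comm]

theorem IsLinear.mirror {t : FreeMagma (Fin 2)} (ht : IsLinear t) : IsLinear (mirror t) :=
  fun v => (varCount_mirror v t).trans_le (ht v.rev)

theorem varCount_zero_add_varCount_one (t : FreeMagma (Fin 2)) :
    varCount 0 t + varCount 1 t = t.length := by
  induction t using FreeMagma.recOnMul with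
  | ih1 w => fin_cases w <;> rfl
  | ih2 p q hp hq =>
    change (varCount 0 p + varCount 0 q) + (varCount 1 p + varCount 1 q) = p.length + q.length
    rw [← hp, ← hq, add_add_add_comm]

theorem IsLinear.length_le_two {t : FreeMagma (Fin 2)} (ht : IsLinear t) : t.length ≤ 2 :=
  (varCount_zero_add_varCount_one t).symm.trans_le (add_le_add (ht 0) (ht 1))

theorem exists_eq_of_of_length_le_one {α : Type*} {t : FreeMagma α} (ht : t.length ≤ 1) :
    ∃ a, t = .of a := by
  cases t with
  | of a => exact ⟨a, rfl⟩
  | mul p q =>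
    have hlen : p.length + q.length ≤ 1 := ht
    have hp := p.length_pos
    have hq := q.length_pos
    omega

theorem IsLinear.eq_of_or_eq_mul {t : FreeMagma (Fin 2)} (ht : IsLinear t) :
    t = .of 0 ∨ t = .of 1 ∨ t = .of 0 * .of 1 ∨ t = .of 1 * .of 0 := by
  cases t with
  | of w => fin_cases w <;> simp
  | mul p q =>
    have hlen : p.length + q.length ≤ 2 := ht.length_le_two
    have hp := p.length_pos
    have hq := q.length_pos
    obtain ⟨a, rfl⟩ := exists_eq_of_of_length_le_one (t := p) (by omega)
    obtain ⟨b, rfl⟩ := exists_eq_of_of_length_le_one (t := q) (by omega)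
    have hab : a ≠ b := by
      rintro rfl
      simpa [varCount] using ht a
    fin_cases a <;> fin_cases b <;> simp_all [FreeMagma.mul_eq]

end Terms

section Opposite

variable {M : Type*} [Mul M]

theorem IsMedial.of_op (h : IsMedial Mᵐᵒᵖ) : IsMedial M :=
  fun x y u v => MulOpposite.op_injective (h (.op v) (.op u) (.op y) (.op x))

theorem IsGeneralizedEntropic.op {t s : FreeMagma (Fin 2)} (h : IsGeneralizedEntropic M t s) :
    IsGeneralizedEntropic Mᵐᵒᵖ (mirror s) (mirror t) := fun x y u v => by
  rw [evalBin_mirror, evalBin_mirror]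
  exact MulOpposite.unop_injective (h v.unop u.unop y.unop x.unop)

end Opposite

section LeftProjection

variable {M : Type*} [Mul M] {s : FreeMagma (Fin 2)}

theorem isMedial_of_left_eq_fst (hidem : ∀ x : M, x * x = x)
    (h : ∀ x y u v : M, (x * y) * (u * v) = x * evalBin s y v) : IsMedial M := by
  have mul_mul_eq (x y v : M) : (x * y) * v = x * evalBin s y v := by rw [← h x y v v, hidem]
  have mul_mul_eq_mul (x u v : M) : x * (u * v) = x * v := by
    rw [← hidem x, h, ← mul_mul_eq]
  have mul_evalBin (x : M) := apply_evalBin_eq_left_or_right (mul_mul_eq_mul x) s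
  intro x y u v
  rcases mul_evalBin x with hs | hs
  · have left_zero (v : M) : x * v = x := by
      rw [← hidem x, mul_mul_eq, hs]
    rw [h, h, hs, left_zero, left_zero]
  · rw [h, h, hs, hs]

theorem isMedial_of_left_eq_snd (hidem : ∀ x : M, x * x = x)
    (h : ∀ x y u v : M, (x * y) * (u * v) = u * evalBin s y v) : IsMedial M := by
  have hs_self (x : M) : evalBin s x x = x := evalBin_self (hidem x) s
  have mul_mul_eq (y u v : M) : y * (u * v) = u * evalBin s y v := by rw [← h y y, hidem]
  have mul_mul_eq_mul (x y w : M) : (x * y) * w = y * w := by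
    rw [← hidem w, h, mul_mul_eq]
  have evalBin_eq_mul (y v : M) : evalBin s y v = y * v := by
    rcases apply_evalBin_eq_left_or_right (φ := fun a w => a * w)
      (fun x y => funext (mul_mul_eq_mul x y)) s with hs | hs
    · have evalBin_eq (y v : M) : evalBin s y v = y * (y * v) := by
        rw [mul_mul_eq, ← congrFun (hs y v), hidem]
      have absorb (y v : M) : v * (y * v) = y * v := by rw [mul_mul_eq, hs_self]
      calc evalBin s y v = y * (y * v) := evalBin_eq y v
        _ = y * (v * (v * (y * v))) := by rw [absorb, absorb]
        _ = v * (y * (y * v)) := by rw [← evalBin_eq, ← mul_mul_eq]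
        _ = y * v := by rw [← evalBin_eq, ← mul_mul_eq, hidem]
    · calc evalBin s y v = v * evalBin s y v := by rw [← congrFun (hs y v), hidem]
        _ = y * v := by rw [← mul_mul_eq, hidem]
  intro x y u v
  rw [h, mul_mul_eq_mul, evalBin_eq_mul]

end LeftProjection

section LeftMul

variable {M : Type*} [Mul M] {s : M → M → M}

theorem isMedial_of_left_eq_mul (hidem : ∀ x : M, x * x = x)
    (h : ∀ x y u v : M, (x * y) * (u * v) = (x * u) * s y v) : IsMedial M := by
  have mul_mul_eq (x y v : M) : x * (y * v) = (x * y) * s x v := by rw [← h, hidem]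
  have mul_distrib (x y v : M) : x * (y * v) = (x * y) * (x * v) := by
    calc x * (y * v) = (x * y) * s x v := mul_mul_eq x y v
      _ = (x * y) * (s x v * s x v) := by rw [hidem]
      _ = (x * s x v) * s y (s x v) := h ..
      _ = (x * (x * v)) * s y (s x v) := by rw [mul_mul_eq x x v, hidem]
      _ = (x * y) * ((x * v) * s x v) := (h ..).symm
      _ = (x * y) * (x * v) := by rw [← mul_mul_eq, hidem]
  intro x y u v
  calc (x * y) * (u * v) = (x * u) * s y v := h ..
    _ = ((x * u) * y) * ((x * u) * v) := by rw [h, hidem]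
    _ = (x * u) * (y * v) := (mul_distrib ..).symm

end LeftMul

section LeftSwap

variable {M : Type*} [Mul M]

theorem mul_mul_self_comm (hidem : ∀ x : M, x * x = x)
    (hanti : ∀ x y z : M, (x * y) * z = (y * z) * (x * z)) (x y : M) :
    (x * y) * x = (y * x) * x := by
  rw [hanti, hidem]

theorem mul_eq_mul_of_mul_eq_right (hidem : ∀ x : M, x * x = x)
    (hanti : ∀ x y z : M, (x * y) * z = (y * z) * (x * z)) {p q : M}
    (hpq : p * q = q) (hqp : q * p = p) (w : M) : p * w = q * w := by
  have hP : (p * w) * (q * w) = p * w := by rw [← hanti, hqp]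
  have hQ : (q * w) * (p * w) = q * w := by rw [← hanti, hpq]
  calc p * w = (p * w) * (q * w) := hP.symm
    _ = ((p * w) * (q * w)) * (q * w) := by rw [hP, hP]
    _ = ((q * w) * (p * w)) * (q * w) := (mul_mul_self_comm hidem hanti _ _).symm
    _ = q * w := by rw [hQ, hidem]

variable {s : M → M → M}

theorem mul_mul_eq_mul_mul_of_left_eq_swap (hs : ∀ x, s x x = x)
    (h : ∀ x y u v : M, (x * y) * (u * v) = (u * x) * s y v) (x y z : M) :
    (x * y) * z = (y * z) * (x * z) := by
  rw [h, hs]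

theorem mul_mul_swap_of_left_eq_swap (hidem : ∀ x : M, x * x = x) (hs : ∀ x, s x x = x)
    (h : ∀ x y u v : M, (x * y) * (u * v) = (u * x) * s y v) (x y u v : M) :
    (x * y) * ((x * u) * v) = (x * y) * ((u * x) * v) := by
  rw [h, h, mul_mul_self_comm hidem (mul_mul_eq_mul_mul_of_left_eq_swap hs h)]

theorem swap_mul_eq_right_of_left_eq_swap (hidem : ∀ x : M, x * x = x) (hs : ∀ x, s x x = x)
    (h : ∀ x y u v : M, (x * y) * (u * v) = (u * x) * s y v) (x u : M) :
    (u * x) * (x * u) = x * u := by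
  have hanti := mul_mul_eq_mul_mul_of_left_eq_swap hs h
  have hcomm := mul_mul_self_comm hidem hanti
  have hswap := mul_mul_swap_of_left_eq_swap hidem hs h
  obtain ⟨p, hp⟩ : ∃ p, p = x * u := ⟨_, rfl⟩
  obtain ⟨q, hq⟩ : ∃ q, q = u * x := ⟨_, rfl⟩
  obtain ⟨c, hc⟩ : ∃ c, c = s x u := ⟨_, rfl⟩
  have q_c : q * c = p := by rw [hq, hc, ← h, hidem, hidem, hp]
  have p_c : p * c = q * p := by rw [hp, hc, ← h, hq]
  have p_qp : p * (q * p) = p := by rw [hp, hq, ← hswap, hidem, hidem]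
  have p_pq : p * (p * q) = p * q := by rw [hp, hq, hswap, hidem]
  have pq_c : (p * q) * c = p := by rw [hanti, q_c, p_c, p_qp]
  have qp_c : (q * p) * c = p :=
    calc (q * p) * c = (p * x) * (q * u) := by rw [hc, h]
      _ = (q * x) * (p * u) := by rw [hp, hq, hcomm x u, hcomm u x]
      _ = (p * q) * c := by rw [hc, h]
      _ = p := pq_c
  have pq_p : (p * q) * p = p :=
    calc (p * q) * p = (q * p) * p := hcomm p q
      _ = (p * c) * (q * c) := by rw [p_c, q_c]
      _ = p := by rw [← hanti, qp_c]
  have hpc : p * c = (p * q) * c := mul_eq_mul_of_mul_eq_right hidem hanti p_pq pq_p c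
  rw [← hp, ← hq, ← p_c, hpc, pq_c]

theorem isMedial_of_left_eq_swap (hidem : ∀ x : M, x * x = x) (hs : ∀ x, s x x = x)
    (h : ∀ x y u v : M, (x * y) * (u * v) = (u * x) * s y v) : IsMedial M := by
  have hanti := mul_mul_eq_mul_mul_of_left_eq_swap hs h
  have hswap := swap_mul_eq_right_of_left_eq_swap hidem hs h
  have mul_mul_comm (x u w : M) : (x * u) * w = (u * x) * w :=
    mul_eq_mul_of_mul_eq_right hidem hanti (hswap u x) (hswap x u) w
  exact isMedial_of_left_eq_mul hidem fun x y u v => by rw [h, mul_mul_comm]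

end LeftSwap

theorem isMedial_of_isLinear_left {M : Type*} [Mul M] (hidem : ∀ x : M, x * x = x)
    {t s : FreeMagma (Fin 2)} (h : IsGeneralizedEntropic M t s) (ht : IsLinear t) :
    IsMedial M := by
  have hs (x : M) : evalBin s x x = x := evalBin_self (hidem x) s
  rcases ht.eq_of_or_eq_mul with rfl | rfl | rfl | rfl
  · exact isMedial_of_left_eq_fst hidem h
  · exact isMedial_of_left_eq_snd hidem h
  · exact isMedial_of_left_eq_mul hidem h
  · exact isMedial_of_left_eq_swap hidem hs h

/-- An idempotent magma satisfying the generalized entropic property with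
terms `t`, `s`, at least one of which is linear, is medial. -/
theorem stmt_5 {M : Type*} [Mul M] (hidem : ∀ x : M, x * x = x)
    (t s : FreeMagma (Fin 2))
    (hGEP : ∀ x y u v : M, (x * y) * (u * v) = evalBin t x u * evalBin s y v)
    (hlin : IsLinear t ∨ IsLinear s) :
    ∀ x y u v : M, (x * y) * (u * v) = (x * u) * (y * v) := by
  change IsMedial M
  rcases hlin with ht | hs
  · exact isMedial_of_isLinear_left hidem hGEP ht
  · have hidem_op (x : Mᵐᵒᵖ) : x * x = x := MulOpposite.unop_injective (hidem x.unop)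
    have hGEP_op : IsGeneralizedEntropic Mᵐᵒᵖ (mirror s) (mirror t) := .op hGEP
    exact (isMedial_of_isLinear_left hidem_op hGEP_op hs.mirror).of_op
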